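/- Let F_1, F_2, … be a uniformly attracting sequence of correctly ordered automorphisms of ℂ^k with contraction constant b < 1 (so ‖F_n(z)‖ ≤ b‖z‖ on the unit ball B), and let Ω = {z : F(n)(z) → 0} be its basin of attraction. Let G_1, G_2, … be lower triangular polynomial automorphisms of ℂ^k with G_n′(0) = F_n′(0), of uniformly bounded degree with uniformly bounded coefficients, and let X_0, X_1, … be polynomial self-maps of ℂ^k with linear part the identity and uniformly bounded coefficients and degrees. Suppose there exist γ ≥ 1 with ‖G(n)^{-1}(w) − G(n)^{-1}(w′)‖ ≤ γ^n ‖w − w′‖ for all w, w′ ∈ B and all n, an integer q with γ b^q < 1, and C > 0 such that ‖G_n^{-1}(X_n(F_n(z))) − X_{n−1}(z)‖ ≤ C‖z‖^{q+1} for every n ≥ 1 and z ∈ B. Then the maps Ψ_n = G(n)^{-1} ∘ X_n ∘ F(n) converge uniformly on compact subsets of Ω to a biholomorphic map Ψ from Ω onto ℂ^k; in particular Ω is biholomorphic to ℂ^k. -/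

import Mathlib

open Metric Filter Topology

noncomputable section

/-- `ℂ^k` with the Euclidean norm. -/
abbrev Ck (k : ℕ) := EuclideanSpace ℂ (Fin k)

/-- `seqComp F n = F_{n-1} ∘ ⋯ ∘ F_0` (the composition of the first `n` maps). -/
def seqComp {α : Type*} (f : ℕ → α → α) : ℕ → α → α
  | 0 => id
  | n + 1 => f n ∘ seqComp f n

/-- `seqCompInv g n = g_0 ∘ ⋯ ∘ g_{n-1}`: if `g_m` is the inverse of `G_m`, this is the
inverse `G(n)⁻¹` of the composition `G(n) = G_{n-1} ∘ ⋯ ∘ G_0`. -/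
def seqCompInv {α : Type*} (g : ℕ → α → α) : ℕ → α → α
  | 0 => id
  | n + 1 => seqCompInv g n ∘ g n

/-- An automorphism of `ℂ^k`: a bijective holomorphic map with holomorphic inverse. -/
def IsAutomorphism {k : ℕ} (F : Ck k → Ck k) : Prop :=
  Differentiable ℂ F ∧ ∃ Finv : Ck k → Ck k, Differentiable ℂ Finv ∧
    Function.LeftInverse Finv F ∧ Function.RightInverse Finv F

/-- The matrix of the derivative of `F` at `0` in the standard basis. -/
def derivMatrix {k : ℕ} (F : Ck k → Ck k) : Matrix (Fin k) (Fin k) ℂ :=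
  fun i j => fderiv ℂ F 0 (EuclideanSpace.single j 1) i

/-- `F` is correctly ordered: `F'(0)` is lower triangular with diagonal entries satisfying
`|λ_j||λ_i| < |λ_l|` whenever `l ≤ j`, for every `i`. -/
def CorrectlyOrdered {k : ℕ} (F : Ck k → Ck k) : Prop :=
  (∀ i j : Fin k, i < j → derivMatrix F i j = 0) ∧
    ∀ l j i : Fin k, l ≤ j →
      ‖derivMatrix F j j‖ * ‖derivMatrix F i i‖ < ‖derivMatrix F l l‖

/-- The polynomial self-map of `ℂ^k` determined by a `k`-tuple of polynomials. -/
def evalPolyMap {k : ℕ} (P : Fin k → MvPolynomial (Fin k) ℂ) : Ck k → Ck k :=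
  fun z => (WithLp.equiv 2 (∀ _ : Fin k, ℂ)).symm
    (fun j => MvPolynomial.eval (fun i => z i) (P j))

/-- A polynomial map `G = (g_1, …, g_k)` with `G(0) = 0` is lower triangular if
`g_j(z) = c_j z_j + h_j(z_1, …, z_{j-1})`. -/
def LowerTriPolyMap {k : ℕ} (P : Fin k → MvPolynomial (Fin k) ℂ) : Prop :=
  ∀ j : Fin k, (P j).coeff 0 = 0 ∧
    ∀ d ∈ (P j).support, d = Finsupp.single j 1 ∨ ∀ i : Fin k, j ≤ i → d i = 0


section Helpers

variable {E F' : Type*} [NormedAddCommGroup E] [NormedSpace ℂ E]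
  [NormedAddCommGroup F'] [NormedSpace ℂ F']

theorem aux_lip {f : E → F'} {R ε : ℝ} (hf : DifferentiableOn ℂ f (ball 0 R))
    (hb : ∀ z ∈ ball (0 : E) R, ‖f z‖ ≤ ε) {x y : E} (hx : x ∈ ball (0 : E) (R / 3))
    (hy : y ∈ ball (0 : E) (R / 3)) : ‖f x - f y‖ ≤ 3 * ε / R * ‖x - y‖ := by
  rw [mem_ball_zero_iff] at hx hy
  have hR : 0 < R := by linarith [norm_nonneg x]
  have hsub : ball y (2 * R / 3) ⊆ ball 0 R := by
    intro z hz
    rw [mem_ball, dist_eq_norm] at hz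
    rw [mem_ball_zero_iff]
    have : ‖z‖ ≤ ‖z - y‖ + ‖y‖ := by simpa using norm_add_le (z - y) y
    linarith
  have h := Complex.dist_le_div_mul_dist_of_mapsTo_ball (f := f) (c := y) (z := x)
    (R₁ := 2 * R / 3) (R₂ := 2 * ε) (hf.mono hsub) (by
      intro z hz
      rw [mem_closedBall, dist_eq_norm]
      have h1 := hb z (hsub hz)
      have h2 := hb y (hsub (mem_ball_self (by positivity)))
      linarith [norm_sub_le (f z) (f y)]) (by
      rw [mem_ball, dist_eq_norm]
      linarith [norm_sub_le x y])
  rw [dist_eq_norm, dist_eq_norm] at h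
  refine h.trans_eq ?_
  field_simp

theorem aux_inv [FiniteDimensional ℂ E] {S : E → E} {r : ℝ} (hr : 0 < r)
    (hS : DifferentiableOn ℂ S (ball 0 r))
    (hlip : ∀ x ∈ ball (0 : E) r, ∀ y ∈ ball (0 : E) r,
      ‖(S x - x) - (S y - y)‖ ≤ 1 / 2 * ‖x - y‖) :
    ∃ T : E → E, DifferentiableOn ℂ T (ball (S 0) (r / 2)) ∧
      ∀ w ∈ ball (S 0) (r / 2), T w ∈ ball (0 : E) r ∧ S (T w) = w := by
  have : CompleteSpace E := FiniteDimensional.complete ℂ E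
  rcases subsingleton_or_nontrivial E with hE | hE
  · refine ⟨id, differentiableOn_id, fun w _ => ⟨?_, Subsingleton.elim _ _⟩⟩
    rw [Subsingleton.elim (id w) 0]
    exact mem_ball_self hr
  have happ : ApproximatesLinearOn S ((ContinuousLinearEquiv.refl ℂ E : E ≃L[ℂ] E) : E →L[ℂ] E)
      (ball 0 r) (1 / 2 : NNReal) := by
    intro x hx y hy
    have := hlip x hx y hy
    simp only [ContinuousLinearEquiv.coe_refl, ContinuousLinearMap.coe_id', id]
    calc ‖S x - S y - (x - y)‖ = ‖(S x - x) - (S y - y)‖ := by congr 1; abel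
      _ ≤ _ := by simpa using this
  have hN : ‖(((ContinuousLinearEquiv.refl ℂ E).symm : E ≃L[ℂ] E) : E →L[ℂ] E)‖₊ = 1 := by
    simp
  have hc : Subsingleton E ∨ (1 / 2 : NNReal) <
      ‖(((ContinuousLinearEquiv.refl ℂ E).symm : E ≃L[ℂ] E) : E →L[ℂ] E)‖₊⁻¹ := by
    right; rw [hN]; rw [inv_one]; exact NNReal.half_lt_self one_ne_zero
  let e := happ.toOpenPartialHomeomorph S (ball 0 r) hc isOpen_ball
  have hes : e.source = ball 0 r := rfl
  have heS : ∀ x, e x = S x := fun x => rfl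
  have htar : ball (S 0) (r / 2) ⊆ e.target := by
    intro w hw
    rw [mem_ball] at hw
    set δ := 2 * dist w (S 0)
    have hδ : δ < r := by simp only [δ]; linarith
    have := happ.closedBall_subset_target hc isOpen_ball (b := 0) (ε := δ)
      (by positivity) (closedBall_subset_ball hδ)
    apply this
    rw [hN, mem_closedBall]
    simp only [δ]
    push_cast
    linarith
  refine ⟨e.symm, ?_, fun w hw => ⟨?_, ?_⟩⟩
  · intro w hw
    have hm : e.symm w ∈ ball (0 : E) r := by rw [← hes]; exact e.map_target (htar hw)
    have hd : HasFDerivAt S (fderiv ℂ S (e.symm w)) (e.symm w) :=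
      (hS.differentiableAt (isOpen_ball.mem_nhds hm)).hasFDerivAt
    have hle : ‖fderiv ℂ S (e.symm w) - ContinuousLinearMap.id ℂ E‖ ≤ 1 / 2 := by
      refine (hd.sub (hasFDerivAt_id _)).le_of_lip' (by norm_num) ?_
      filter_upwards [isOpen_ball.mem_nhds hm] with x hx
      exact hlip x hx _ hm
    have hinj : Function.Injective (fderiv ℂ S (e.symm w)) := by
      rw [injective_iff_map_eq_zero]
      intro v hv
      have h1 := (fderiv ℂ S (e.symm w) - ContinuousLinearMap.id ℂ E).le_of_opNorm_le hle v
      simp [hv] at h1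
      have : ‖v‖ ≤ 0 := by linarith
      simpa using this
    let L : E ≃L[ℂ] E := (LinearEquiv.ofInjectiveEndo _
      (show Function.Injective ((fderiv ℂ S (e.symm w)) : E →ₗ[ℂ] E) from hinj)).toContinuousLinearEquiv
    have hL : (L : E →L[ℂ] E) = fderiv ℂ S (e.symm w) := by
      ext v; rfl
    rw [← hL] at hd
    exact (e.hasFDerivAt_symm (htar hw) hd).differentiableAt.differentiableWithinAt
  · rw [← hes]; exact e.map_target (htar hw)
  · exact e.right_inv (htar hw)

theorem aux_limit [CompleteSpace F'] {U : Set E} (hU : IsOpen U) {f : ℕ → E → F'}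
    {g : E → F'} (hf : ∀ n, DifferentiableOn ℂ (f n) U) (hfg : TendstoUniformlyOn f g atTop U) :
    DifferentiableOn ℂ g U := by
  intro x0 hx0
  obtain ⟨r, hr, hsub⟩ := Metric.isOpen_iff.1 hU x0 hx0
  have hb : ∀ x ∈ ball x0 (r / 2), ball x (r / 2) ⊆ U := by
    intro x hx
    refine (ball_subset_ball' ?_).trans hsub
    rw [mem_ball] at hx; linarith
  have hat : ∀ n, ∀ x ∈ ball x0 (r / 2), DifferentiableAt ℂ (f n) x := fun n x hx =>
    (hf n).differentiableAt (hU.mem_nhds (hb x hx (mem_ball_self (by positivity))))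
  have hcau := hfg.uniformCauchySeqOn
  rw [Metric.uniformCauchySeqOn_iff] at hcau
  have hc' : UniformCauchySeqOn (fun n x => fderiv ℂ (f n) x) atTop (ball x0 (r / 2)) := by
    rw [Metric.uniformCauchySeqOn_iff]
    intro ε hε
    obtain ⟨N, hN⟩ := hcau (ε * r / 8) (by positivity)
    refine ⟨N, fun m hm n hn x hx => ?_⟩
    rw [dist_eq_norm, ← fderiv_sub (hat m x hx) (hat n x hx)]
    have hx' : x ∈ U := hb x hx (mem_ball_self (by positivity))
    have := Complex.norm_fderiv_le_div_of_mapsTo_ball (f := f m - f n) (c := x)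
      (R₁ := r / 2) (R₂ := ε * r / 4) (((hf m).sub (hf n)).mono (hb x hx)) (by
        intro z hz
        have h1 := hN m hm n hn z (hb x hx hz)
        have h2 := hN m hm n hn x hx'
        rw [dist_eq_norm] at h1 h2
        rw [mem_closedBall, dist_eq_norm]
        simp only [Pi.sub_apply]
        linarith [norm_sub_le (f m z - f n z) (f m x - f n x)]) (by positivity)
    refine this.trans_lt ?_
    have : ε * r / 4 / (r / 2) = ε / 2 := by field_simp; norm_num
    rw [this]; linarith
  have hpt : ∀ x ∈ ball x0 (r / 2), ∃ l, Tendsto (fun n => fderiv ℂ (f n) x) atTop (𝓝 l) :=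
    fun x hx => cauchySeq_tendsto_of_complete (hc'.cauchySeq hx)
  choose! g' hg' using hpt
  have hu := hc'.tendstoUniformlyOn_of_tendsto hg'
  exact (hasFDerivAt_of_tendstoUniformlyOn isOpen_ball hu
    (fun n x hx => (hat n x hx).hasFDerivAt)
    (fun x hx => hfg.tendsto_at (hb x hx (mem_ball_self (by positivity))))
    (mem_ball_self (by positivity))).differentiableAt.differentiableWithinAt

theorem aux_concl [FiniteDimensional ℂ E] {Ω : Set E} {Ψ : E → E}
    (hΨ : DifferentiableOn ℂ Ψ Ω) {Ψn : ℕ → E → E} {D : ℕ → Set E}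
    (hD : ∀ z ∈ Ω, ∀ᶠ n in atTop, z ∈ D n)
    (hlim : ∀ z ∈ Ω, Tendsto (fun n => Ψn n z) atTop (𝓝 (Ψ z)))
    (hφ : ∀ R > 0, ∀ ε > 0, ∀ᶠ n in atTop, ∃ φ : E → E, DifferentiableOn ℂ φ (ball 0 R) ∧
      (∀ w ∈ ball (0 : E) R, φ w ∈ Ω) ∧ (∀ w ∈ ball (0 : E) R, ‖Ψ (φ w) - w‖ ≤ ε) ∧
      (∀ z ∈ D n, Ψn n z ∈ ball (0 : E) R → φ (Ψn n z) = z)) :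
    ∃ Φ : E → E, Differentiable ℂ Φ ∧ (∀ w, Φ w ∈ Ω) ∧ (∀ z ∈ Ω, Φ (Ψ z) = z) ∧
      (∀ w, Ψ (Φ w) = w) := by
  have key : ∀ R > 0, ∀ᶠ n in atTop, ∃ φ : E → E, DifferentiableOn ℂ φ (ball 0 R) ∧
      (∀ w ∈ ball (0 : E) R, φ w ∈ Ω) ∧ (∀ w ∈ ball (0 : E) R, ‖Ψ (φ w) - w‖ ≤ R / 24) ∧
      (∀ z ∈ D n, Ψn n z ∈ ball (0 : E) R → φ (Ψn n z) = z) ∧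
      (∀ x ∈ ball (0 : E) (R / 3), ∀ y ∈ ball (0 : E) (R / 3),
        ‖(Ψ (φ x) - x) - (Ψ (φ y) - y)‖ ≤ 1 / 2 * ‖x - y‖) := by
    intro R hR
    filter_upwards [hφ R hR (R / 24) (by positivity)] with n hn
    obtain ⟨φ, h1, h2, h3, h4⟩ := hn
    refine ⟨φ, h1, h2, h3, h4, fun x hx y hy => ?_⟩
    have := aux_lip (f := fun x => Ψ (φ x) - x) ((hΨ.comp h1 h2).sub differentiableOn_id) h3 hx hy
    refine this.trans ?_
    have e : 3 * (R / 24) / R = 1 / 8 := by field_simp; norm_num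
    rw [e]
    gcongr
    norm_num
  have hinj : ∀ z ∈ Ω, ∀ z' ∈ Ω, Ψ z = Ψ z' → z = z' := by
    intro z hz z' hz' h
    set R := 3 * (‖Ψ z‖ + 1)
    have hR : 0 < R := by positivity
    have ev : ∀ z ∈ Ω, ‖Ψ z‖ < R / 3 → ∀ᶠ n in atTop, ‖Ψn n z‖ < R / 3 := fun z hz hlt =>
      (hlim z hz).norm.eventually (gt_mem_nhds hlt)
    have e0 : ‖Ψ z‖ < R / 3 := by simp only [R]; linarith
    obtain ⟨n, ⟨φ, h1, h2, h3, h4, h5⟩, d1, d2, b1, b2⟩ := ((key R hR).and ((hD z hz).and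
      ((hD z' hz').and ((ev z hz e0).and (ev z' hz' (h ▸ e0)))))).exists
    have m1 : Ψn n z ∈ ball (0 : E) (R / 3) := by simpa using b1
    have m2 : Ψn n z' ∈ ball (0 : E) (R / 3) := by simpa using b2
    have hs : ball (0 : E) (R / 3) ⊆ ball 0 R := ball_subset_ball (by linarith)
    have p1 := h4 z d1 (hs m1)
    have p2 := h4 z' d2 (hs m2)
    have := h5 _ m1 _ m2
    rw [p1, p2, h] at this
    have e : Ψ z' - Ψn n z - (Ψ z' - Ψn n z') = -(Ψn n z - Ψn n z') := by abel
    rw [e, norm_neg] at this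
    have : Ψn n z = Ψn n z' := by
      rw [← sub_eq_zero, ← norm_le_zero_iff]; linarith
    rw [← p1, ← p2, this]
  have hloc : ∀ R > 0, ∃ T : E → E, DifferentiableOn ℂ T (ball 0 (R / 8)) ∧
      ∀ w ∈ ball (0 : E) (R / 8), T w ∈ Ω ∧ Ψ (T w) = w := by
    intro R hR
    obtain ⟨n, φ, h1, h2, h3, h4, h5⟩ := (key R hR).exists
    have hs : ball (0 : E) (R / 3) ⊆ ball 0 R := ball_subset_ball (by linarith)
    obtain ⟨T, hT, hT'⟩ := aux_inv (S := fun x => Ψ (φ x)) (r := R / 3) (by positivity)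
      ((hΨ.comp h1 h2).mono hs) h5
    have hs' : ball (0 : E) (R / 8) ⊆ ball (Ψ (φ 0)) (R / 3 / 2) := by
      apply ball_subset_ball'
      have := h3 0 (mem_ball_self hR)
      rw [dist_eq_norm, norm_sub_rev]; linarith
    refine ⟨fun w => φ (T w), h1.comp (hT.mono hs') fun w hw => hs (hT' w (hs' hw)).1,
      fun w hw => ⟨h2 _ (hs (hT' w (hs' hw)).1), (hT' w (hs' hw)).2⟩⟩
  have hsurj : ∀ w, ∃ z ∈ Ω, Ψ z = w := by
    intro w
    obtain ⟨T, _, h⟩ := hloc (8 * (‖w‖ + 1)) (by positivity)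
    exact ⟨T w, h w (by rw [mem_ball_zero_iff]; linarith)⟩
  choose Φ hΦ1 hΦ2 using hsurj
  refine ⟨Φ, fun w => ?_, hΦ1, fun z hz => hinj _ (hΦ1 _) _ hz (hΦ2 _), hΦ2⟩
  obtain ⟨T, hT, h⟩ := hloc (8 * (‖w‖ + 1)) (by positivity)
  have hw : ball (0 : E) (8 * (‖w‖ + 1) / 8) ∈ 𝓝 w :=
    isOpen_ball.mem_nhds (by rw [mem_ball_zero_iff]; linarith)
  refine (hT.differentiableAt hw).congr_of_eventuallyEq ?_
  filter_upwards [hw] with v hv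
  exact hinj _ (hΦ1 v) _ (h v hv).1 ((hΦ2 v).trans (h v hv).2.symm)

end Helpers

section PolyHelpers

theorem aux_norm_le_sum {k : ℕ} (v : Ck k) : ‖v‖ ≤ ∑ j, ‖v j‖ := by
  rw [EuclideanSpace.norm_eq]
  apply Real.sqrt_le_iff.2
  exact ⟨Finset.sum_nonneg fun _ _ => norm_nonneg _,
    Finset.sum_sq_le_sq_sum_of_nonneg (fun _ _ => norm_nonneg _)⟩

theorem aux_poly_bound (k D : ℕ) : ∃ N : ℝ, 0 ≤ N ∧ ∀ (P : MvPolynomial (Fin k) ℂ) (M t : ℝ)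
    (z : Fin k → ℂ), 0 ≤ M → 0 ≤ t →
    (∀ d, P.coeff d ≠ 0 → d.degree ≤ D ∧ ‖P.coeff d‖ ≤ M ∧ ∏ i, ‖z i‖ ^ d i ≤ t) →
    ‖MvPolynomial.eval z P‖ ≤ N * M * t := by
  have hfin := Finsupp.finite_of_degree_le (σ := Fin k) D
  refine ⟨hfin.toFinset.card, by positivity, fun P M t z hM ht h => ?_⟩
  rw [MvPolynomial.eval_eq']
  have hsub : P.support ⊆ hfin.toFinset := by
    intro d hd
    simpa using (h d (by simpa using hd)).1
  calc ‖∑ d ∈ P.support, P.coeff d * ∏ i, z i ^ d i‖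
      ≤ ∑ d ∈ P.support, M * t := by
        refine norm_sum_le_of_le _ fun d hd => ?_
        obtain ⟨_, h2, h3⟩ := h d (by simpa using hd)
        rw [norm_mul, norm_prod]
        simp only [norm_pow]
        exact mul_le_mul h2 h3 (Finset.prod_nonneg fun _ _ => by positivity) hM
    _ = P.support.card * (M * t) := by simp
    _ ≤ hfin.toFinset.card * (M * t) := by
        gcongr
    _ = _ := by ring

theorem aux_monomial {k : ℕ} (z : Fin k → ℂ) (d : Fin k →₀ ℕ) (s : ℝ)
    (h : ∀ i, d i ≠ 0 → ‖z i‖ ≤ s) : ∏ i, ‖z i‖ ^ d i ≤ s ^ d.degree := by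
  rw [Finsupp.degree_eq_sum, ← Finset.prod_pow_eq_pow_sum]
  refine Finset.prod_le_prod (fun _ _ => by positivity) fun i _ => ?_
  by_cases hi : d i = 0
  · simp [hi]
  · exact pow_le_pow_left₀ (norm_nonneg _) (h i hi) _

theorem aux_deg {k D : ℕ} {P : MvPolynomial (Fin k) ℂ} (h : P.totalDegree ≤ D)
    {d : Fin k →₀ ℕ} (hd : P.coeff d ≠ 0) : d.degree ≤ D :=
  (MvPolynomial.le_totalDegree (by simpa using hd)).trans h

theorem aux_eval_diff {k : ℕ} (P : MvPolynomial (Fin k) ℂ) :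
    Differentiable ℂ (fun z : Ck k => MvPolynomial.eval (fun i => z i) P) := by
  induction P using MvPolynomial.induction_on with
  | C a => simp
  | add p q hp hq =>
    simp only [map_add]
    exact hp.add hq
  | mul_X p i hp =>
    simp only [map_mul, MvPolynomial.eval_X]
    exact hp.mul (by fun_prop)

theorem aux_poly_diff {k : ℕ} (P : Fin k → MvPolynomial (Fin k) ℂ) :
    Differentiable ℂ (evalPolyMap P) := by
  rw [differentiable_euclidean]
  exact fun j => aux_eval_diff (P j)

theorem aux_X {k : ℕ} (X : ℕ → Fin k → MvPolynomial (Fin k) ℂ)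
    (hXconst : ∀ n j, (X n j).coeff 0 = 0)
    (hXlin : ∀ n (j i : Fin k), (X n j).coeff (Finsupp.single i 1) = if i = j then 1 else 0)
    (DX : ℕ) (hXdeg : ∀ n j, (X n j).totalDegree ≤ DX)
    (MX : ℝ) (hXco : ∀ n j m, ‖(X n j).coeff m‖ ≤ MX) :
    ∃ M : ℝ, 0 ≤ M ∧ ∀ n (z : Ck k), ‖z‖ ≤ 1 → ‖evalPolyMap (X n) z - z‖ ≤ M * ‖z‖ ^ 2 := by
  obtain ⟨N, hN, h⟩ := aux_poly_bound k DX
  refine ⟨k * (N * |MX|), by positivity, fun n z hz => ?_⟩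
  refine (aux_norm_le_sum _).trans ?_
  have : ∀ j, ‖(evalPolyMap (X n) z - z) j‖ ≤ N * |MX| * ‖z‖ ^ 2 := by
    intro j
    have hQ : (evalPolyMap (X n) z - z) j =
        MvPolynomial.eval (fun i => z i) (X n j - MvPolynomial.X j) := by
      simp [evalPolyMap]
    rw [hQ]
    refine h _ _ _ _ (abs_nonneg _) (by positivity) fun d hd => ?_
    have hd0 : d ≠ 0 := by
      rintro rfl
      simp [hXconst] at hd
    have hd1 : ∀ i, Finsupp.single i 1 ≠ d := by
      rintro i rfl
      apply hd
      rw [MvPolynomial.coeff_sub, hXlin, MvPolynomial.coeff_X]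
      by_cases hij : i = j
      · simp [hij]
      · have : ¬ (Finsupp.single j 1 = Finsupp.single i 1) := by
          intro h
          exact hij ((Finsupp.single_left_injective one_ne_zero h).symm)
        simp [hij, this]
    have hc : (X n j - MvPolynomial.X j).coeff d = (X n j).coeff d := by
      rw [MvPolynomial.coeff_sub, MvPolynomial.coeff_X, if_neg (hd1 j), sub_zero]
    rw [hc] at hd ⊢
    refine ⟨aux_deg (hXdeg n j) hd, (hXco n j d).trans (le_abs_self _), ?_⟩
    refine (aux_monomial _ d ‖z‖ fun i _ => PiLp.norm_apply_le z i).trans ?_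
    refine pow_le_pow_of_le_one (norm_nonneg _) hz ?_
    by_contra hlt
    have : d.degree = 0 ∨ d.degree = 1 := by omega
    rcases this with h0 | h1
    · exact hd0 ((Finsupp.degree_eq_zero_iff d).1 h0)
    · have h1' : d.sum (fun _ n => n) = 1 := h1
      rw [Finsupp.sum_eq_one_iff] at h1'
      obtain ⟨i, hi⟩ := h1'
      exact hd1 i hi.symm
  calc ∑ j, ‖(evalPolyMap (X n) z - z) j‖ ≤ ∑ j : Fin k, N * |MX| * ‖z‖ ^ 2 :=
        Finset.sum_le_sum fun j _ => this j
    _ = _ := by simp; ring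

/-- The part of `P j` off the diagonal linear term only involves earlier variables. -/
theorem aux_tri {k : ℕ} {P : Fin k → MvPolynomial (Fin k) ℂ} (hP : LowerTriPolyMap P)
    (j : Fin k) (d : Fin k →₀ ℕ)
    (hd : (P j - MvPolynomial.C ((P j).coeff (Finsupp.single j 1)) * MvPolynomial.X j).coeff d ≠ 0) :
    (P j - MvPolynomial.C ((P j).coeff (Finsupp.single j 1)) * MvPolynomial.X j).coeff d
      = (P j).coeff d ∧ d ≠ 0 ∧ ∀ i, j ≤ i → d i = 0 := by
  have hne : Finsupp.single j 1 ≠ d := by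
    rintro rfl
    simp [MvPolynomial.coeff_C_mul, MvPolynomial.coeff_X] at hd
  have hc : (P j - MvPolynomial.C ((P j).coeff (Finsupp.single j 1)) * MvPolynomial.X j).coeff d
      = (P j).coeff d := by
    rw [MvPolynomial.coeff_sub, MvPolynomial.coeff_C_mul, MvPolynomial.coeff_X, if_neg hne]
    simp
  refine ⟨hc, ?_, ?_⟩
  · rintro rfl
    exact hd (by rw [hc]; exact (hP j).1)
  · rw [hc] at hd
    rcases (hP j).2 d (by simpa using hd) with h | h
    · exact absurd h.symm hne
    · exact h

theorem aux_Ginv_diff {k : ℕ} {P : Fin k → MvPolynomial (Fin k) ℂ} (hP : LowerTriPolyMap P)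
    (hc : ∀ j, (P j).coeff (Finsupp.single j 1) ≠ 0) {g : Ck k → Ck k}
    (hg : Function.RightInverse g (evalPolyMap P)) : Differentiable ℂ g := by
  rw [differentiable_euclidean]
  intro j
  induction j using WellFoundedLT.induction with
  | ind j ih =>
  set Q := P j - MvPolynomial.C ((P j).coeff (Finsupp.single j 1)) * MvPolynomial.X j with hQ
  have h1 : ∀ w, g w j = ((P j).coeff (Finsupp.single j 1))⁻¹ *
      (w j - MvPolynomial.eval (fun i => g w i) Q) := by
    intro w
    have : MvPolynomial.eval (fun i => g w i) (P j) = w j := by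
      have := congrArg (fun v : Ck k => v j) (hg w)
      simpa [evalPolyMap] using this
    rw [hQ, map_sub, this, map_mul, MvPolynomial.eval_C, MvPolynomial.eval_X]
    field_simp [hc j]
    ring
  have h2 : (fun w => g w j) = fun w => ((P j).coeff (Finsupp.single j 1))⁻¹ *
      (w j - MvPolynomial.eval (fun i => g w i) Q) := funext h1
  rw [h2]
  refine Differentiable.const_mul (Differentiable.sub (by fun_prop) ?_) _
  simp only [MvPolynomial.eval_eq']
  refine Differentiable.fun_sum fun d hd => ?_
  refine Differentiable.const_mul ?_ _
  obtain ⟨_, _, h⟩ := aux_tri hP j d (by simpa [hQ] using hd)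
  suffices hs : ∀ i, Differentiable ℂ (fun w => g w i ^ d i) by
    generalize (Finset.univ : Finset (Fin k)) = u
    induction u using Finset.induction_on with
    | empty => simp
    | insert a u ha ihu =>
      simp only [Finset.prod_insert ha]
      exact (hs a).mul ihu
  intro i
  rcases lt_or_ge i j with hij | hij
  · exact (ih i hij).pow _
  · simp [h i hij]

theorem aux_G {k : ℕ} (G : ℕ → Fin k → MvPolynomial (Fin k) ℂ)
    (hGLT : ∀ n, LowerTriPolyMap (G n))
    (DG : ℕ) (hGdeg : ∀ n j, (G n j).totalDegree ≤ DG)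
    (MG : ℝ) (hGco : ∀ n j m, ‖(G n j).coeff m‖ ≤ MG)
    {b ρ : ℝ} (hb0 : 0 < b) (hbρ : b < ρ) (hρ : ρ < 1)
    (hdiag : ∀ n j, ‖(G n j).coeff (Finsupp.single j 1)‖ ≤ b) {R : ℝ} (hR : 0 < R) :
    ∃ A : ℝ, 0 < A ∧ ∀ n, ∀ w ∈ ball (0 : Ck k) R,
      ‖seqComp (fun n => evalPolyMap (G n)) n w‖ ≤ A * ρ ^ n := by
  obtain ⟨N, hN, hpb⟩ := aux_poly_bound k DG
  have hρ0 : 0 < ρ := hb0.trans hbρ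
  set Gs := seqComp (fun n => evalPolyMap (G n)) with hGs
  have main : ∀ j : Fin k, ∃ A : ℝ, 0 ≤ A ∧ ∀ n, ∀ w ∈ ball (0 : Ck k) R,
      ‖Gs n w j‖ ≤ A * ρ ^ n := by
    intro j
    induction j using WellFoundedLT.induction with
    | ind j ih =>
    choose! A hA0 hA using ih
    set B := 1 + ∑ i, |A i| with hB
    have hB1 : 1 ≤ B := by
      have : 0 ≤ ∑ i, |A i| := Finset.sum_nonneg fun _ _ => abs_nonneg _
      linarith
    have hAB : ∀ i, i < j → ∀ n, ∀ w ∈ ball (0 : Ck k) R, ‖Gs n w i‖ ≤ B * ρ ^ n := by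
      intro i hi n w hw
      refine (hA i hi n w hw).trans ?_
      gcongr
      have := Finset.single_le_sum (f := fun i => |A i|) (fun _ _ => abs_nonneg _)
        (Finset.mem_univ i)
      have h2 := le_abs_self (A i)
      linarith
    set K := N * |MG| * B ^ DG with hK
    have hK0 : 0 ≤ K := by positivity
    refine ⟨R + K / (ρ - b), by have := sub_pos.2 hbρ; positivity, fun n w hw => ?_⟩
    set D := R + K / (ρ - b) with hD
    have hDK : K ≤ D * (ρ - b) := by
      have := sub_pos.2 hbρ
      rw [hD, add_mul, div_mul_cancel₀ _ this.ne']
      have : 0 ≤ R * (ρ - b) := by positivity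
      linarith
    induction n with
    | zero =>
      have h1 : ‖w j‖ ≤ ‖w‖ := PiLp.norm_apply_le w j
      rw [mem_ball_zero_iff] at hw
      have : 0 ≤ K / (ρ - b) := by have := sub_pos.2 hbρ; positivity
      simp only [hGs, seqComp, id, pow_zero, mul_one]
      linarith
    | succ n ihn =>
      set z := Gs n w with hz
      have e : Gs (n + 1) w j = (G n j).coeff (Finsupp.single j 1) * z j +
          MvPolynomial.eval (fun i => z i) (G n j -
            MvPolynomial.C ((G n j).coeff (Finsupp.single j 1)) * MvPolynomial.X j) := by
        simp [hGs, seqComp, evalPolyMap, hz]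
      have hQ : ‖MvPolynomial.eval (fun i => z i) (G n j -
            MvPolynomial.C ((G n j).coeff (Finsupp.single j 1)) * MvPolynomial.X j)‖
            ≤ N * |MG| * (B ^ DG * ρ ^ n) := by
        refine hpb _ _ _ _ (abs_nonneg _) (by positivity) fun d hd => ?_
        obtain ⟨h1, h2, h3⟩ := aux_tri (hGLT n) j d hd
        rw [h1] at hd ⊢
        have hdeg := aux_deg (hGdeg n j) hd
        refine ⟨hdeg, (hGco n j d).trans (le_abs_self _), ?_⟩
        refine (aux_monomial _ d (B * ρ ^ n) fun i hi => ?_).trans ?_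
        · refine hAB i ?_ n w hw
          by_contra hcon
          exact hi (h3 i (not_lt.1 hcon))
        · rw [mul_pow]
          have hd1 : 1 ≤ d.degree := by
            rw [Nat.one_le_iff_ne_zero, Ne, Finsupp.degree_eq_zero_iff]
            exact h2
          refine mul_le_mul (pow_le_pow_right₀ hB1 hdeg) ?_ (by positivity) (by positivity)
          have := pow_le_pow_of_le_one (pow_nonneg hρ0.le n) (pow_le_one₀ hρ0.le hρ.le) hd1
          simpa using this
      rw [e]
      calc _ ≤ ‖(G n j).coeff (Finsupp.single j 1) * z j‖ + _ := norm_add_le _ _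
        _ ≤ b * (D * ρ ^ n) + N * |MG| * (B ^ DG * ρ ^ n) := by
          rw [norm_mul]
          gcongr
          exact hdiag n j
        _ = (b * D + K) * ρ ^ n := by rw [hK]; ring
        _ ≤ (D * ρ) * ρ ^ n := by gcongr; linarith
        _ = _ := by ring
  choose A hA0 hA using main
  refine ⟨1 + ∑ j, A j, ?_, fun n w hw => ?_⟩
  · have : 0 ≤ ∑ j, A j := Finset.sum_nonneg fun j _ => hA0 j
    linarith
  · refine (aux_norm_le_sum _).trans ((Finset.sum_le_sum fun j _ => hA j n w hw).trans ?_)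
    rw [← Finset.sum_mul]
    gcongr
    linarith

end PolyHelpers

section SeqHelpers

theorem aux_seq_left {α : Type*} {f g : ℕ → α → α} (h : ∀ n, Function.LeftInverse (g n) (f n))
    (n : ℕ) : Function.LeftInverse (seqCompInv g n) (seqComp f n) := by
  induction n with
  | zero => intro x; rfl
  | succ n ih =>
    intro x
    change seqCompInv g n (g n (f n (seqComp f n x))) = x
    rw [h n, ih]

theorem aux_seq_right {α : Type*} {f g : ℕ → α → α} (h : ∀ n, Function.RightInverse (g n) (f n))
    (n : ℕ) : Function.RightInverse (seqCompInv g n) (seqComp f n) := by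
  induction n with
  | zero => intro x; rfl
  | succ n ih =>
    intro x
    change f n (seqComp f n (seqCompInv g n (g n x))) = x
    rw [ih, h n]

theorem aux_seq_diff {k : ℕ} {f : ℕ → Ck k → Ck k} (h : ∀ n, Differentiable ℂ (f n)) (n : ℕ) :
    Differentiable ℂ (seqComp f n) := by
  induction n with
  | zero => exact differentiable_id
  | succ n ih => exact (h n).comp ih

theorem aux_seqInv_diff {k : ℕ} {f : ℕ → Ck k → Ck k} (h : ∀ n, Differentiable ℂ (f n)) (n : ℕ) :
    Differentiable ℂ (seqCompInv f n) := by
  induction n with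
  | zero => exact differentiable_id
  | succ n ih => exact ih.comp (h n)

end SeqHelpers

/-- **Convergence of the telescoping maps.** Let `F_n` be a uniformly attracting sequence of
correctly ordered automorphisms of `ℂ^k` with contraction constant `b < 1`, with basin
`Ω = {z : F(n)(z) → 0}`. Let `G_n` be lower triangular polynomial automorphisms (with inverses
`Ginv n` of the single maps) with `G_n'(0) = F_n'(0)`, of uniformly bounded degrees and
coefficients, and `X_n` polynomial maps with linear part the identity and uniformly bounded
degrees and coefficients. Assume `γ ≥ 1` with `‖G(n)⁻¹ w - G(n)⁻¹ w'‖ ≤ γ^n ‖w - w'‖` on the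
unit ball, `q` with `γ b^q < 1`, and `C > 0` with
`‖G_n⁻¹(X_n(F_n(z))) - X_{n-1}(z)‖ ≤ C‖z‖^{q+1}` on the unit ball. Then
`Ψ_n = G(n)⁻¹ ∘ X_n ∘ F(n)` converges uniformly on compact subsets of `Ω` to a biholomorphic
map `Ψ : Ω → ℂ^k`; in particular `Ω` is biholomorphic to `ℂ^k`. -/
theorem telescoping_limit_biholo (k : ℕ)
    (F : ℕ → Ck k → Ck k) (hauto : ∀ n, IsAutomorphism (F n)) (hfix : ∀ n, F n 0 = 0)
    (hord : ∀ n, CorrectlyOrdered (F n))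
    (a b : ℝ) (ha : 0 < a) (hab : a < b) (hb : b < 1)
    (hbd : ∀ n, ∀ z ∈ ball (0 : Ck k) 1, a * ‖z‖ ≤ ‖F n z‖ ∧ ‖F n z‖ ≤ b * ‖z‖)
    (ξ : ℝ) (hξ : ξ < 1)
    (hξbd : ∀ n, ∀ l j i : Fin k, l ≤ j →
      ‖derivMatrix (F n) i i‖ * ‖derivMatrix (F n) j j‖ ≤ ξ * ‖derivMatrix (F n) l l‖)
    (G : ℕ → Fin k → MvPolynomial (Fin k) ℂ)
    (hGLT : ∀ n, LowerTriPolyMap (G n))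
    (hGlin : ∀ n (j i : Fin k), (G n j).coeff (Finsupp.single i 1) = derivMatrix (F n) j i)
    (DG : ℕ) (hGdeg : ∀ n j, (G n j).totalDegree ≤ DG)
    (MG : ℝ) (hGco : ∀ n j m, ‖(G n j).coeff m‖ ≤ MG)
    (Ginv : ℕ → Ck k → Ck k)
    (hGinv : ∀ n, Function.LeftInverse (Ginv n) (evalPolyMap (G n)) ∧
      Function.RightInverse (Ginv n) (evalPolyMap (G n)))
    (X : ℕ → Fin k → MvPolynomial (Fin k) ℂ)
    (hXconst : ∀ n j, (X n j).coeff 0 = 0)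
    (hXlin : ∀ n (j i : Fin k), (X n j).coeff (Finsupp.single i 1) = if i = j then 1 else 0)
    (DX : ℕ) (hXdeg : ∀ n j, (X n j).totalDegree ≤ DX)
    (MX : ℝ) (hXco : ∀ n j m, ‖(X n j).coeff m‖ ≤ MX)
    (γ : ℝ) (hγ1 : 1 ≤ γ)
    (hγ : ∀ n, ∀ w ∈ ball (0 : Ck k) 1, ∀ w' ∈ ball (0 : Ck k) 1,
      ‖seqCompInv Ginv n w - seqCompInv Ginv n w'‖ ≤ γ ^ n * ‖w - w'‖)
    (q : ℕ) (hq : γ * b ^ q < 1)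
    (C : ℝ) (hC : 0 < C)
    (hest : ∀ n, ∀ z ∈ ball (0 : Ck k) 1,
      ‖Ginv n (evalPolyMap (X (n + 1)) (F n z)) - evalPolyMap (X n) z‖ ≤ C * ‖z‖ ^ (q + 1)) :
    ∃ Ψ Φ : Ck k → Ck k,
      (∀ K : Set (Ck k),
        K ⊆ {z : Ck k | Tendsto (fun n => seqComp F n z) atTop (𝓝 0)} → IsCompact K →
        TendstoUniformlyOn
          (fun n z => seqCompInv Ginv n (evalPolyMap (X n) (seqComp F n z))) Ψ atTop K) ∧
      DifferentiableOn ℂ Ψ {z : Ck k | Tendsto (fun n => seqComp F n z) atTop (𝓝 0)} ∧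
      Differentiable ℂ Φ ∧
      (∀ w, Φ w ∈ {z : Ck k | Tendsto (fun n => seqComp F n z) atTop (𝓝 0)}) ∧
      (∀ z ∈ {z : Ck k | Tendsto (fun n => seqComp F n z) atTop (𝓝 0)}, Φ (Ψ z) = z) ∧
      (∀ w, Ψ (Φ w) = w) := by
  have hb0 : 0 < b := ha.trans hab
  have hγ0 : 0 < γ := one_pos.trans_le hγ1
  have hFd : ∀ n, Differentiable ℂ (F n) := fun n => (hauto n).1
  choose Finv hFinvd hFl hFr using fun n => (hauto n).2
  -- diagonal bounds
  have hentry : ∀ n (j : Fin k), ‖derivMatrix (F n) j j‖ ≤ b := by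
    intro n j
    have h1 : ‖fderiv ℂ (F n) 0‖ ≤ b := by
      refine (hFd n 0).hasFDerivAt.le_of_lip' hb0.le ?_
      filter_upwards [ball_mem_nhds (0 : Ck k) one_pos] with z hz
      simpa [hfix n] using (hbd n z hz).2
    calc ‖derivMatrix (F n) j j‖ ≤ ‖fderiv ℂ (F n) 0 (EuclideanSpace.single j 1)‖ :=
          PiLp.norm_apply_le _ j
      _ ≤ b * ‖(EuclideanSpace.single j 1 : Ck k)‖ :=
          ContinuousLinearMap.le_of_opNorm_le _ h1 _
      _ = b := by simp
  have hdiag : ∀ n j, ‖(G n j).coeff (Finsupp.single j 1)‖ ≤ b := by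
    intro n j; rw [hGlin]; exact hentry n j
  have hdiag0 : ∀ n j, (G n j).coeff (Finsupp.single j 1) ≠ 0 := by
    intro n j
    rw [hGlin, ← norm_pos_iff]
    exact lt_of_le_of_lt (by positivity) ((hord n).2 j j j le_rfl)
  have hGinvd : ∀ n, Differentiable ℂ (Ginv n) := fun n =>
    aux_Ginv_diff (hGLT n) (hdiag0 n) (hGinv n).2
  -- rates
  set θ := γ * b ^ (q + 1) with hθdef
  have hθ0 : 0 < θ := by positivity
  have hθ1 : θ < 1 := by
    have : θ = (γ * b ^ q) * b := by rw [hθdef, pow_succ]; ring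
    rw [this]
    calc (γ * b ^ q) * b ≤ 1 * b := by gcongr
      _ < 1 := by linarith
  obtain ⟨ρ, hρ⟩ : ∃ ρ : ℝ, (γ * ρ ^ (q + 1) < 1 ∧ ρ < 1) ∧ b < ρ := by
    have hcont : Continuous fun x : ℝ => γ * x ^ (q + 1) := by fun_prop
    have e1 : ∀ᶠ x in 𝓝 b, γ * x ^ (q + 1) < 1 := hcont.continuousAt.eventually_lt_const hθ1
    have e2 : ∀ᶠ x in 𝓝 b, x < 1 := eventually_lt_nhds hb
    exact ((((e1.and e2).filter_mono nhdsWithin_le_nhds).and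
      (self_mem_nhdsWithin (a := b) (s := Set.Ioi b))).exists)
  obtain ⟨⟨hρ1, hρ2⟩, hρ3⟩ := hρ
  have hρ0 : 0 < ρ := hb0.trans hρ3
  -- the maps X
  obtain ⟨M, hM0, hM⟩ := aux_X X hXconst hXlin DX hXdeg MX hXco
  obtain ⟨r, hr0, hr3, hrM, hrC⟩ : ∃ r : ℝ, 0 < r ∧ 3 * r ≤ 1 ∧ 18 * M * r ≤ 1 ∧ 4 * C * r ≤ 1 := by
    have hp : 0 < 18 * M + 4 * C + 3 := by positivity
    refine ⟨1 / (18 * M + 4 * C + 3), by positivity, ?_, ?_, ?_⟩ <;>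
    · rw [mul_one_div, div_le_one hp]; linarith
  have hX0 : ∀ n, evalPolyMap (X n) 0 = 0 := by
    intro n
    have := hM n 0 (by simp)
    simpa using this
  have hXl : ∀ n, ∀ x ∈ ball (0 : Ck k) r, ∀ y ∈ ball (0 : Ck k) r,
      ‖(evalPolyMap (X n) x - x) - (evalPolyMap (X n) y - y)‖ ≤ 1 / 2 * ‖x - y‖ := by
    intro n x hx y hy
    have h := aux_lip (f := fun x => evalPolyMap (X n) x - x) (R := 3 * r) (ε := 9 * M * r ^ 2)
      ((aux_poly_diff (X n)).sub differentiable_id).differentiableOn (by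
        intro z hz
        rw [mem_ball_zero_iff] at hz
        refine (hM n z (by linarith)).trans ?_
        calc M * ‖z‖ ^ 2 ≤ M * (3 * r) ^ 2 := by gcongr
          _ = _ := by ring) (x := x) (y := y) (by
        rwa [show 3 * r / 3 = r by ring]) (by
        rwa [show 3 * r / 3 = r by ring])
    refine h.trans ?_
    have e : 3 * (9 * M * r ^ 2) / (3 * r) = 9 * M * r := by field_simp
    rw [e]
    gcongr
    linarith
  have hXup : ∀ n, ∀ x ∈ ball (0 : Ck k) r, ‖evalPolyMap (X n) x‖ ≤ 3 / 2 * ‖x‖ := by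
    intro n x hx
    have := hXl n x hx 0 (mem_ball_self hr0)
    rw [hX0] at this
    simp only [sub_zero] at this
    have h2 : ‖evalPolyMap (X n) x‖ ≤ ‖evalPolyMap (X n) x - x‖ + ‖x‖ := by
      simpa using norm_add_le (evalPolyMap (X n) x - x) x
    linarith
  have hXlow : ∀ n, ∀ x ∈ ball (0 : Ck k) r, ∀ y ∈ ball (0 : Ck k) r,
      ‖x - y‖ ≤ 2 * ‖evalPolyMap (X n) x - evalPolyMap (X n) y‖ := by
    intro n x hx y hy
    have h1 := hXl n x hx y hy
    have h2 := norm_sub_le (evalPolyMap (X n) x - evalPolyMap (X n) y)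
      ((evalPolyMap (X n) x - x) - (evalPolyMap (X n) y - y))
    have e : evalPolyMap (X n) x - evalPolyMap (X n) y -
      ((evalPolyMap (X n) x - x) - (evalPolyMap (X n) y - y)) = x - y := by abel
    rw [e] at h2
    linarith
  have hT : ∀ n, ∃ T : Ck k → Ck k, DifferentiableOn ℂ T (ball 0 (r / 2)) ∧
      ∀ w ∈ ball (0 : Ck k) (r / 2), T w ∈ ball (0 : Ck k) r ∧ evalPolyMap (X n) (T w) = w := by
    intro n
    have := aux_inv hr0 (aux_poly_diff (X n)).differentiableOn (hXl n)
    rwa [hX0] at this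
  choose T hTd hT using hT
  -- abbreviations
  set Ω := {z : Ck k | Tendsto (fun n => seqComp F n z) atTop (𝓝 0)} with hΩ
  set Ψn : ℕ → Ck k → Ck k :=
    fun n z => seqCompInv Ginv n (evalPolyMap (X n) (seqComp F n z)) with hΨn
  have hΨnd : ∀ n, Differentiable ℂ (Ψn n) := fun n =>
    (aux_seqInv_diff hGinvd n).comp ((aux_poly_diff (X n)).comp (aux_seq_diff hFd n))
  -- contraction
  have hcontr : ∀ n z δ, ‖seqComp F n z‖ < 1 → ‖seqComp F n z‖ ≤ δ →
      ∀ i, ‖seqComp F (n + i) z‖ ≤ b ^ i * δ ∧ ‖seqComp F (n + i) z‖ ≤ ‖seqComp F n z‖ := by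
    intro n z δ h1 h2 i
    induction i with
    | zero => simpa using h2
    | succ i ih =>
      have h3 := (hbd (n + i) (seqComp F (n + i) z) (by
        rw [mem_ball_zero_iff]; exact ih.2.trans_lt h1)).2
      have e : seqComp F (n + (i + 1)) z = F (n + i) (seqComp F (n + i) z) := rfl
      rw [e]
      constructor
      · calc _ ≤ b * ‖seqComp F (n + i) z‖ := h3
          _ ≤ b * (b ^ i * δ) := by gcongr; exact ih.1
          _ = _ := by ring
      · calc _ ≤ b * ‖seqComp F (n + i) z‖ := h3
          _ ≤ 1 * ‖seqComp F (n + i) z‖ := by gcongr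
          _ ≤ _ := by rw [one_mul]; exact ih.2
  -- telescoping
  have hstep : ∀ n z δ, ‖seqComp F n z‖ < r → ‖seqComp F n z‖ ≤ δ → ∀ i,
      dist (Ψn (n + i) z) (Ψn (n + (i + 1)) z) ≤ (C * γ ^ n * δ ^ (q + 1)) * θ ^ i := by
    intro n z δ h1 h2 i
    obtain ⟨hc1, hc2⟩ := hcontr n z δ (by linarith) h2 i
    set y := seqComp F (n + i) z with hy
    have hyr : ‖y‖ < r := hc2.trans_lt h1
    have hy1 : ‖y‖ < 1 := by linarith
    have hE := hest (n + i) y (by rwa [mem_ball_zero_iff])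
    have hXy := hXup (n + i) y (by rwa [mem_ball_zero_iff])
    have hle : C * ‖y‖ ^ (q + 1) ≤ C * ‖y‖ := by
      gcongr
      exact pow_le_of_le_one (norm_nonneg _) hy1.le (by omega)
    have hCy : C * ‖y‖ ≤ C * r := by gcongr
    have hm1 : evalPolyMap (X (n + i)) y ∈ ball (0 : Ck k) 1 := by
      rw [mem_ball_zero_iff]; linarith
    have hm2 : Ginv (n + i) (evalPolyMap (X (n + i + 1)) (F (n + i) y)) ∈ ball (0 : Ck k) 1 := by
      rw [mem_ball_zero_iff]
      have := norm_add_le (Ginv (n + i) (evalPolyMap (X (n + i + 1)) (F (n + i) y)) -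
        evalPolyMap (X (n + i)) y) (evalPolyMap (X (n + i)) y)
      rw [sub_add_cancel] at this
      linarith
    have hL := hγ (n + i) _ hm2 _ hm1
    have e1 : Ψn (n + (i + 1)) z = seqCompInv Ginv (n + i)
      (Ginv (n + i) (evalPolyMap (X (n + i + 1)) (F (n + i) y))) := rfl
    have e2 : Ψn (n + i) z = seqCompInv Ginv (n + i) (evalPolyMap (X (n + i)) y) := rfl
    rw [dist_comm, dist_eq_norm, e1, e2]
    have hδ : 0 ≤ δ := (norm_nonneg _).trans h2
    calc _ ≤ γ ^ (n + i) * (C * ‖y‖ ^ (q + 1)) := hL.trans (by gcongr)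
      _ ≤ γ ^ (n + i) * (C * (b ^ i * δ) ^ (q + 1)) := by gcongr
      _ = _ := by rw [hθdef, mul_pow γ, mul_pow (b ^ i), ← pow_mul b, ← pow_mul b, pow_add γ,
                    mul_comm i (q + 1)]; ring
  -- the basin
  have hΩr : ∀ z, z ∈ Ω ↔ ∃ n, ‖seqComp F n z‖ < r := by
    intro z
    constructor
    · intro hz
      have hz' : Tendsto (fun n => seqComp F n z) atTop (𝓝 0) := hz
      have := hz'.norm
      rw [norm_zero] at this
      exact (this.eventually (gt_mem_nhds hr0)).exists
    · rintro ⟨n, hn⟩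
      change Tendsto (fun n => seqComp F n z) atTop (𝓝 0)
      rw [← tendsto_add_atTop_iff_nat n]
      apply squeeze_zero_norm (a := fun i => b ^ i * r)
      · intro i
        rw [add_comm]
        exact (hcontr n z r (by linarith) hn.le i).1
      · simpa using (tendsto_pow_atTop_nhds_zero_of_lt_one hb0.le hb).mul_const r
  set D : ℕ → Set (Ck k) := fun n => {z | ‖seqComp F n z‖ < r} with hD
  have hDo : ∀ n, IsOpen (D n) := fun n =>
    isOpen_lt (aux_seq_diff hFd n).continuous.norm continuous_const
  have hDmono : Monotone D := by
    apply monotone_nat_of_le_succ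
    intro n z hz
    have hz' : ‖seqComp F n z‖ < r := hz
    exact (hcontr n z r (by linarith) hz'.le 1).2.trans_lt hz'
  have hDΩ : ∀ n, D n ⊆ Ω := fun n z hz => (hΩr z).2 ⟨n, hz⟩
  -- the limit
  have hex : ∀ z ∈ Ω, ∃ l, Tendsto (fun n => Ψn n z) atTop (𝓝 l) := by
    intro z hz
    obtain ⟨n, hn⟩ := (hΩr z).1 hz
    have hc := cauchySeq_of_le_geometric θ _ hθ1 (hstep n z r hn hn.le)
    obtain ⟨l, hl⟩ := cauchySeq_tendsto_of_complete hc
    refine ⟨l, ?_⟩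
    rw [← tendsto_add_atTop_iff_nat n]
    simpa only [add_comm] using hl
  choose! Ψ hΨ using hex
  have hest2 : ∀ n z δ, ‖seqComp F n z‖ < r → ‖seqComp F n z‖ ≤ δ → ∀ i,
      dist (Ψn (n + i) z) (Ψ z) ≤ (C * γ ^ n * δ ^ (q + 1)) * θ ^ i / (1 - θ) := by
    intro n z δ h1 h2 i
    refine dist_le_of_le_geometric_of_tendsto θ _ hθ1 (f := fun i => Ψn (n + i) z)
      (hstep n z δ h1 h2) ?_ i
    have := hΨ z ((hΩr z).2 ⟨n, h1⟩)
    rw [← tendsto_add_atTop_iff_nat n] at this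
    simpa only [add_comm] using this
  have hunif : ∀ n, TendstoUniformlyOn Ψn Ψ atTop (D n) := by
    intro n
    rw [Metric.tendstoUniformlyOn_iff]
    intro ε hε
    have ht : Tendsto (fun i => (C * γ ^ n * r ^ (q + 1)) * θ ^ i / (1 - θ)) atTop (𝓝 0) := by
      have := ((tendsto_pow_atTop_nhds_zero_of_lt_one hθ0.le hθ1).const_mul
        (C * γ ^ n * r ^ (q + 1))).div_const (1 - θ)
      simpa using this
    obtain ⟨N, hN⟩ := (ht.eventually (gt_mem_nhds hε)).exists_forall_of_atTop
    filter_upwards [eventually_ge_atTop (n + N)] with m hm z hz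
    obtain ⟨i, rfl⟩ := Nat.exists_eq_add_of_le (show n ≤ m by omega)
    rw [dist_comm]
    exact (hest2 n z r hz (le_of_lt hz) i).trans_lt (hN i (by omega))
  have hΨd : DifferentiableOn ℂ Ψ Ω := by
    intro z hz
    obtain ⟨n, hn⟩ := (hΩr z).1 hz
    have := aux_limit (hDo n) (fun m => (hΨnd m).differentiableOn) (hunif n)
    exact (this.differentiableAt ((hDo n).mem_nhds hn)).differentiableWithinAt
  have hfin := aux_concl (Ω := Ω) (Ψ := Ψ) hΨd (Ψn := Ψn) (D := D) (by
      intro z hz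
      obtain ⟨n, hn⟩ := (hΩr z).1 hz
      filter_upwards [eventually_ge_atTop n] with m hm
      exact hDmono hm hn) hΨ (by
      intro R hR ε hε
      obtain ⟨A, hA0, hA⟩ := aux_G G hGLT DG hGdeg MG hGco hb0 hρ3 hρ2 hdiag hR
      have t1 : Tendsto (fun n => A * ρ ^ n) atTop (𝓝 0) := by
        simpa using (tendsto_pow_atTop_nhds_zero_of_lt_one hρ0.le hρ2).const_mul A
      have t2 : Tendsto (fun n => C * (2 * A) ^ (q + 1) / (1 - θ) * (γ * ρ ^ (q + 1)) ^ n)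
          atTop (𝓝 0) := by
        simpa using (tendsto_pow_atTop_nhds_zero_of_lt_one (by positivity) hρ1).const_mul
          (C * (2 * A) ^ (q + 1) / (1 - θ))
      filter_upwards [t1.eventually (gt_mem_nhds (half_pos hr0)),
        t2.eventually (gt_mem_nhds hε)] with n hn1 hn2
      set Gs := seqComp (fun n => evalPolyMap (G n)) n with hGs
      have hGsb : ∀ w ∈ ball (0 : Ck k) R, Gs w ∈ ball (0 : Ck k) (r / 2) := by
        intro w hw
        rw [mem_ball_zero_iff]
        exact (hA n w hw).trans_lt hn1
      have hFφ : ∀ w, seqComp F n (seqCompInv Finv n w) = w := aux_seq_right hFr n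
      have hTb : ∀ w ∈ ball (0 : Ck k) R, ‖T n (Gs w)‖ ≤ 2 * A * ρ ^ n := by
        intro w hw
        obtain ⟨p1, p2⟩ := hT n _ (hGsb w hw)
        have := hXlow n _ p1 0 (mem_ball_self hr0)
        rw [p2, hX0, sub_zero, sub_zero] at this
        linarith [hA n w hw]
      have hTr : ∀ w ∈ ball (0 : Ck k) R, ‖T n (Gs w)‖ < r := by
        intro w hw
        linarith [hTb w hw]
      refine ⟨fun w => seqCompInv Finv n (T n (Gs w)), ?_, ?_, ?_, ?_⟩
      · exact (aux_seqInv_diff hFinvd n).comp_differentiableOn ((hTd n).comp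
          (aux_seq_diff (fun n => aux_poly_diff (G n)) n).differentiableOn hGsb)
      · intro w hw
        refine (hΩr _).2 ⟨n, ?_⟩
        rw [hFφ]
        exact hTr w hw
      · intro w hw
        have h := hest2 n (seqCompInv Finv n (T n (Gs w))) (2 * A * ρ ^ n)
          (by rw [hFφ]; exact hTr w hw) (by rw [hFφ]; exact hTb w hw) 0
        have e : Ψn (n + 0) (seqCompInv Finv n (T n (Gs w))) = w := by
          change seqCompInv Ginv n (evalPolyMap (X n) (seqComp F n _)) = w
          rw [hFφ, (hT n _ (hGsb w hw)).2]
          exact aux_seq_left (fun n => (hGinv n).1) n w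
        rw [e, dist_comm, dist_eq_norm] at h
        refine h.trans (le_trans (le_of_eq ?_) hn2.le)
        rw [mul_pow (2 * A), ← pow_mul, mul_pow γ, ← pow_mul, mul_comm n (q + 1)]
        ring
      · intro z hz hw
        have hy : Gs (Ψn n z) = evalPolyMap (X n) (seqComp F n z) :=
          aux_seq_right (fun n => (hGinv n).2) n _
        have hyb := hGsb _ hw
        obtain ⟨p1, p2⟩ := hT n _ hyb
        have hzr : seqComp F n z ∈ ball (0 : Ck k) r := by rw [mem_ball_zero_iff]; exact hz
        have h1 := hXlow n _ p1 _ hzr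
        rw [p2, hy, sub_self, norm_zero, mul_zero] at h1
        have h2 := sub_eq_zero.1 (norm_le_zero_iff.1 h1)
        change seqCompInv Finv n (T n (Gs (Ψn n z))) = z
        rw [hy, h2]
        exact aux_seq_left hFl n z)
  obtain ⟨Φ, hΦ1, hΦ2, hΦ3, hΦ4⟩ := hfin
  refine ⟨Ψ, Φ, ?_, hΨd, hΦ1, hΦ2, hΦ3, hΦ4⟩
  intro K hK hKc
  obtain ⟨n, hn⟩ := hKc.elim_directed_cover D hDo (fun z hz => by
    obtain ⟨n, hn⟩ := (hΩr z).1 (hK hz)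
    exact Set.mem_iUnion.2 ⟨n, hn⟩) hDmono.directed_le
  exact (hunif n).mono hn
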